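/- arXiv:2106.02866 — 2 statements merged into one kernel-verified Lean document; each statement's English description precedes it below -/
import Mathlib

section
/- Let Z be a measurable space and X, Y standard Borel spaces; let π be a probability measure on Z; let κ : Kernel Z (X × Y) be a Markov kernel and η : Kernel Z (X × Y) a Markov kernel with η z = ((κ z).map Prod.fst).prod ((κ z).map Prod.snd) for every z. Let n ≥ 1 and let f : X × Y → ℝ be measurable and bounded. Then ENNReal.ofReal ( ∫ z ∂π, ∫ v ∂(Measure.pi (fun _ : Fin n => κ z)), Real.log ( Real.exp (f ((v 0).1, (v 0).2)) / ((1/n) * ∑ j : Fin n, Real.exp (f ((v 0).1, (v j).2))) ) ) ≤ ∫⁻ z, KL(κ z ‖ η z) ∂π. -/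
/-!
Since `ofReal (∫ F ∂π) ≤ ∫⁻ ofReal F ∂π`, it is enough to bound the inner integral for a single
probability measure `P = κ z` on `X × Y`, with `Q` the product of its marginals. Freeze the
negatives `v 1, …, v (n - 1)`. The score is then the logarithm of a positive function of the
positive pair `v 0 = (x, y)`, and the linearised Donsker–Varadhan inequality
`∫ g ∂P ≤ KL(P ‖ Q) + ∫ exp g ∂Q - 1` (`integral_le_integral_llr_add`) bounds its `P`-mean by
`KL(P ‖ Q)` plus the `Q`-mean of that positive function, minus `1`.

Under `Q`, the point `x` is independent of all the `y`-samples, positive one included, so these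
are i.i.d. For each fixed `x` the `n` softmax weights `nceRatio f x v i` are exchangeable in `i`
and add up to `n`, so each has mean `1` (`integral_nceRatio`). Averaging over the negatives, the
correction terms cancel and `KL(P ‖ Q)` remains (`integral_log_nceRatio_le`).
-/

open MeasureTheory ProbabilityTheory
open scoped ENNReal

open Classical in
/-- The Kullback–Leibler divergence valued in `[0, ∞]`. -/
noncomputable def klDiv {α : Type*} [MeasurableSpace α] (P Q : Measure α) : ℝ≥0∞ :=
  if P ≪ Q ∧ Integrable (llr P Q) P then ENNReal.ofReal (∫ a, llr P Q a ∂P) else ⊤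

/-- Every real function satisfies this inequality: it is `∫ F ≤ ∫ F⁺` when `F` is integrable,
and otherwise the left-hand side is `0`. -/
lemma ofReal_integral_le_lintegral_ofReal {α : Type*} [MeasurableSpace α] (μ : Measure α)
    (F : α → ℝ) : ENNReal.ofReal (∫ a, F a ∂μ) ≤ ∫⁻ a, ENNReal.ofReal (F a) ∂μ := by
  by_cases hF : Integrable F μ
  · rw [integral_eq_lintegral_pos_part_sub_lintegral_neg_part hF]
    refine (ENNReal.ofReal_le_ofReal (sub_le_self _ ENNReal.toReal_nonneg)).trans ?_
    exact ENNReal.ofReal_toReal_le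
  · simp [integral_undef hF]

/-- Linearised Donsker–Varadhan inequality: Gibbs' inequality for `P` against `Q` tilted by `g`,
combined with `log t ≤ t - 1`. -/
lemma integral_le_integral_llr_add {α : Type*} [MeasurableSpace α] (P Q : Measure α)
    [IsProbabilityMeasure P] [IsProbabilityMeasure Q] (hPQ : P ≪ Q)
    (hint : Integrable (llr P Q) P) (g : α → ℝ) (hg : Integrable g P)
    (hge : Integrable (fun a => Real.exp (g a)) Q) :
    ∫ a, g a ∂P ≤ ∫ a, llr P Q a ∂P + (∫ a, Real.exp (g a) ∂Q - 1) := by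
  have := isProbabilityMeasure_tilted hge
  have h1 := InformationTheory.integral_llr_add_sub_measure_univ_nonneg
    (hPQ.trans (absolutelyContinuous_tilted hge)) (integrable_llr_tilted_right hPQ hg hint hge)
  rw [integral_llr_tilted_right hPQ hg hge hint] at h1
  have h2 := Real.log_le_sub_one_of_pos (integral_exp_pos hge)
  simp only [probReal_univ] at h1
  linarith

/-- The InfoNCE weight of the `i`-th sample among `v` at the anchor point `x`: its exponentiated
score divided by the average exponentiated score. Only the second components of `v` matter. -/
noncomputable def nceRatio {X Y : Type*} {n : ℕ} (f : X × Y → ℝ) (x : X) (v : Fin n → X × Y)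
    (i : Fin n) : ℝ :=
  Real.exp (f (x, (v i).2)) / (((1 : ℝ) / n) * ∑ j : Fin n, Real.exp (f (x, (v j).2)))

/-- Integrate out the first of `m + 1` i.i.d. samples first, then the others. -/
lemma integral_pi_succ {A : Type*} [MeasurableSpace A] {m : ℕ} (P : Measure A)
    [IsProbabilityMeasure P] (H : (Fin (m + 1) → A) → ℝ)
    (hH : Integrable H (Measure.pi fun _ : Fin (m + 1) => P)) :
    ∫ v, H v ∂(Measure.pi fun _ : Fin (m + 1) => P)
      = ∫ w, ∫ p, H (Fin.cons p w) ∂P ∂(Measure.pi fun _ : Fin m => P) := by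
  have hmp := (measurePreserving_piFinSuccAbove (fun _ : Fin (m + 1) => P) 0).symm
  have hcons : ∀ q : A × (Fin m → A),
      (MeasurableEquiv.piFinSuccAbove (fun _ : Fin (m + 1) => A) 0).symm q = Fin.cons q.1 q.2 := by
    intro q
    simp [MeasurableEquiv.piFinSuccAbove_symm_apply, Fin.insertNthEquiv]
  have hi := (hmp.integrable_comp_emb (MeasurableEquiv.measurableEmbedding _)).2 hH
  rw [← hmp.integral_comp']
  refine (integral_prod_symm _ hi).trans ?_
  simp only [Function.comp_apply, hcons]

section

variable {X Y : Type*} {n : ℕ} {f : X × Y → ℝ}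

lemma sum_nceRatio (hn : 0 < n) (x : X) (v : Fin n → X × Y) :
    ∑ i, nceRatio f x v i = n := by
  have : Nonempty (Fin n) := ⟨⟨0, hn⟩⟩
  have hS : 0 < ∑ j : Fin n, Real.exp (f (x, (v j).2)) :=
    Finset.sum_pos (fun j _ => Real.exp_pos _) Finset.univ_nonempty
  have hn' : (0 : ℝ) < n := by exact_mod_cast hn
  unfold nceRatio
  rw [← Finset.sum_div]
  field_simp

lemma nceRatio_mem_Icc {C : ℝ} (hC : ∀ p, |f p| ≤ C) (x : X) (v : Fin n → X × Y) (i : Fin n) :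
    nceRatio f x v i ∈ Set.Icc (Real.exp (-(2 * C))) (Real.exp (2 * C)) := by
  have hn' : (0 : ℝ) < n := by exact_mod_cast i.pos
  have hlo : Real.exp (-C) ≤ ((1 : ℝ) / n) * ∑ j : Fin n, Real.exp (f (x, (v j).2)) := by
    have : ∑ j : Fin n, Real.exp (-C) ≤ ∑ j : Fin n, Real.exp (f (x, (v j).2)) :=
      Finset.sum_le_sum fun j _ => Real.exp_le_exp.2 (abs_le.1 (hC _)).1
    rw [one_div, inv_mul_eq_div, le_div_iff₀ hn']
    simpa [mul_comm] using this
  have hhi : ((1 : ℝ) / n) * ∑ j : Fin n, Real.exp (f (x, (v j).2)) ≤ Real.exp C := by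
    have : ∑ j : Fin n, Real.exp (f (x, (v j).2)) ≤ ∑ j : Fin n, Real.exp C :=
      Finset.sum_le_sum fun j _ => Real.exp_le_exp.2 (abs_le.1 (hC _)).2
    rw [one_div, inv_mul_eq_div, div_le_iff₀ hn']
    simpa [mul_comm] using this
  have hpos := (Real.exp_pos (-C)).trans_le hlo
  unfold nceRatio
  constructor
  · rw [le_div_iff₀ hpos]
    calc _ ≤ Real.exp (-(2 * C)) * Real.exp C := by gcongr
      _ = Real.exp (-C) := by rw [← Real.exp_add]; ring_nf
      _ ≤ _ := Real.exp_le_exp.2 (abs_le.1 (hC _)).1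
  · rw [div_le_iff₀ hpos]
    calc _ ≤ Real.exp C := Real.exp_le_exp.2 (abs_le.1 (hC _)).2
      _ = Real.exp (2 * C) * Real.exp (-C) := by rw [← Real.exp_add]; ring_nf
      _ ≤ _ := by gcongr

lemma nceRatio_pos (hb : ∃ C, ∀ p, |f p| ≤ C) (x : X) (v : Fin n → X × Y) (i : Fin n) :
    0 < nceRatio f x v i :=
  (Real.exp_pos _).trans_le (nceRatio_mem_Icc hb.choose_spec x v i).1

variable [MeasurableSpace X] [MeasurableSpace Y]

lemma measurable_nceRatio (hf : Measurable f) (i : Fin n) :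
    Measurable (fun q : X × (Fin n → X × Y) => nceRatio f q.1 q.2 i) := by
  unfold nceRatio
  fun_prop

/-- Composing the weight with any measurable choice of anchor and samples gives a bounded, hence
integrable, function. -/
lemma integrable_nceRatio_comp {Ω : Type*} [MeasurableSpace Ω] (μ : Measure Ω) [IsFiniteMeasure μ]
    (hf : Measurable f) (hb : ∃ C, ∀ p, |f p| ≤ C) (i : Fin n) {a : Ω → X}
    {V : Ω → Fin n → X × Y} (ha : Measurable a) (hV : Measurable V) :
    Integrable (fun ω => nceRatio f (a ω) (V ω) i) μ := by
  obtain ⟨C, hC⟩ := hb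
  refine Integrable.of_bound
    ((measurable_nceRatio hf i).comp (ha.prodMk hV)).aestronglyMeasurable (Real.exp (2 * C))
    (ae_of_all _ fun ω => ?_)
  rw [Real.norm_of_nonneg (nceRatio_pos ⟨C, hC⟩ _ _ _).le]
  exact (nceRatio_mem_Icc hC _ _ _).2

lemma integrable_log_nceRatio_comp {Ω : Type*} [MeasurableSpace Ω] (μ : Measure Ω)
    [IsFiniteMeasure μ] (hf : Measurable f) (hb : ∃ C, ∀ p, |f p| ≤ C) (i : Fin n) {a : Ω → X}
    {V : Ω → Fin n → X × Y} (ha : Measurable a) (hV : Measurable V) :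
    Integrable (fun ω => Real.log (nceRatio f (a ω) (V ω) i)) μ := by
  obtain ⟨C, hC⟩ := hb
  refine Integrable.of_bound
    ((measurable_nceRatio hf i).comp (ha.prodMk hV)).log.aestronglyMeasurable (2 * C)
    (ae_of_all _ fun ω => ?_)
  have hpos := nceRatio_pos ⟨C, hC⟩ (a ω) (V ω) i
  have hmem := nceRatio_mem_Icc hC (a ω) (V ω) i
  exact abs_le.2 ⟨(Real.le_log_iff_exp_le hpos).2 hmem.1, (Real.log_le_iff_le_exp hpos).2 hmem.2⟩

/-- For i.i.d. samples and a fixed anchor, the weights are exchangeable and sum to `n`, so each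
has mean `1`. -/
lemma integral_nceRatio (P : Measure (X × Y)) [IsProbabilityMeasure P] (hf : Measurable f)
    (hb : ∃ C, ∀ p, |f p| ≤ C) (x : X) (i : Fin n) :
    ∫ v, nceRatio f x v i ∂(Measure.pi fun _ : Fin n => P) = 1 := by
  have hswap : ∀ k : Fin n, ∫ v, nceRatio f x v k ∂(Measure.pi fun _ : Fin n => P)
      = ∫ v, nceRatio f x v i ∂(Measure.pi fun _ : Fin n => P) := by
    intro k
    have hmp := measurePreserving_arrowCongr' (fun _ : Fin n => P) (fun _ : Fin n => P)
      (Equiv.swap i k) (MeasurableEquiv.refl (X × Y)) (fun _ => MeasurePreserving.id P)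
    rw [← hmp.integral_comp']
    refine integral_congr_ae (ae_of_all _ fun v => ?_)
    have hv : ∀ j, (MeasurableEquiv.arrowCongr' (Equiv.swap i k) (MeasurableEquiv.refl (X × Y)) v) j
        = v (Equiv.swap i k j) := fun j => rfl
    simp only [nceRatio, hv, Equiv.swap_apply_right]
    rw [Equiv.sum_comp (Equiv.swap i k) fun j => Real.exp (f (x, (v j).2))]
  have hsum : ∑ k : Fin n, ∫ v, nceRatio f x v k ∂(Measure.pi fun _ : Fin n => P) = n := by
    rw [← integral_finsetSum _ fun k _ =>
      integrable_nceRatio_comp _ hf hb k measurable_const measurable_id']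
    simp [sum_nceRatio i.pos]
  rw [Finset.sum_congr rfl fun k _ => hswap k] at hsum
  have hn' : (n : ℝ) ≠ 0 := by exact_mod_cast i.pos.ne'
  simpa [hn'] using hsum

/-- The bound for a single joint distribution `P`, with the KL divergence to the product of
the marginals as a real number. -/
lemma integral_log_nceRatio_le {m : ℕ} (P : Measure (X × Y)) [IsProbabilityMeasure P]
    (hf : Measurable f) (hb : ∃ C, ∀ p, |f p| ≤ C)
    (hPQ : P ≪ (P.map Prod.fst).prod (P.map Prod.snd))
    (hint : Integrable (llr P ((P.map Prod.fst).prod (P.map Prod.snd))) P) :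
    ∫ v, Real.log (nceRatio f (v 0).1 v 0) ∂(Measure.pi fun _ : Fin (m + 1) => P)
      ≤ ∫ p, llr P ((P.map Prod.fst).prod (P.map Prod.snd)) p ∂P := by
  have := Measure.isProbabilityMeasure_map (μ := P) measurable_fst.aemeasurable
  have := Measure.isProbabilityMeasure_map (μ := P) measurable_snd.aemeasurable
  set Q := (P.map Prod.fst).prod (P.map Prod.snd) with hQ
  have hcons : Measurable fun q : (X × Y) × (Fin m → X × Y) =>
      (Fin.cons q.1 q.2 : Fin (m + 1) → X × Y) := by
    refine measurable_pi_iff.2 fun j => ?_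
    cases j using Fin.cases with
    | zero => simpa using measurable_fst
    | succ j => simpa using measurable_snd.eval
  -- The mean weight over `(x, y) ∼ Q` becomes a mean over an anchor and an independent sample.
  have hQint : ∀ w : Fin m → X × Y, ∫ p, nceRatio f p.1 (Fin.cons p w : Fin (m + 1) → X × Y) 0 ∂Q
      = ∫ p', ∫ p, nceRatio f p'.1 (Fin.cons p w : Fin (m + 1) → X × Y) 0 ∂P ∂P := by
    intro w
    have hE : Measurable fun q : X × (X × Y) =>
        nceRatio f q.1 (Fin.cons q.2 w : Fin (m + 1) → X × Y) 0 :=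
      (measurable_nceRatio hf 0).comp (measurable_fst.prodMk
        (hcons.comp (measurable_snd.prodMk measurable_const)))
    have hi : Integrable (fun p : X × Y => nceRatio f p.1 (Fin.cons p w : Fin (m + 1) → X × Y) 0) Q :=
      integrable_nceRatio_comp Q hf hb 0 measurable_fst
        (hcons.comp (measurable_id'.prodMk measurable_const))
    have hy : ∀ x : X, Measurable fun y : Y =>
        nceRatio f x (Fin.cons (x, y) w : Fin (m + 1) → X × Y) 0 := fun x =>
      (measurable_nceRatio hf 0).comp (measurable_const.prodMk
        (hcons.comp ((measurable_const.prodMk measurable_id').prodMk measurable_const)))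
    rw [hQ, integral_prod _ hi,
      integral_map measurable_fst.aemeasurable hi.integral_prod_left.aestronglyMeasurable]
    refine integral_congr_ae (ae_of_all _ fun p' => ?_)
    simp only
    rw [integral_map measurable_snd.aemeasurable (hy p'.1).aestronglyMeasurable]
    simp [nceRatio, Fin.sum_univ_succ]
  have hone : ∫ w, ∫ p, nceRatio f p.1 (Fin.cons p w : Fin (m + 1) → X × Y) 0 ∂Q
      ∂(Measure.pi fun _ : Fin m => P) = 1 := by
    simp_rw [hQint]
    rw [integral_integral_swap]
    · have h1 : ∀ p' : X × Y, ∫ w, ∫ p, nceRatio f p'.1 (Fin.cons p w : Fin (m + 1) → X × Y) 0 ∂P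
          ∂(Measure.pi fun _ : Fin m => P) = 1 := fun p' => by
        rw [← integral_pi_succ P (fun v => nceRatio f p'.1 v 0)
          (integrable_nceRatio_comp _ hf hb 0 measurable_const measurable_id'),
          integral_nceRatio P hf hb]
      simp [h1]
    · exact (integrable_nceRatio_comp
        (((Measure.pi fun _ : Fin m => P).prod P).prod P) hf hb (0 : Fin (m + 1))
        (a := fun q => q.1.2.1) (V := fun q => Fin.cons q.2 q.1.1) (by fun_prop)
        (hcons.comp (measurable_snd.prodMk (by fun_prop)))).integral_prod_left
  have hQi : Integrable (fun q : (Fin m → X × Y) × (X × Y) =>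
      nceRatio f q.2.1 (Fin.cons q.2 q.1 : Fin (m + 1) → X × Y) 0)
      ((Measure.pi fun _ : Fin m => P).prod Q) :=
    integrable_nceRatio_comp _ hf hb 0 (by fun_prop) (hcons.comp measurable_swap)
  have hPi : Integrable (fun q : (Fin m → X × Y) × (X × Y) =>
      Real.log (nceRatio f q.2.1 (Fin.cons q.2 q.1 : Fin (m + 1) → X × Y) 0))
      ((Measure.pi fun _ : Fin m => P).prod P) :=
    integrable_log_nceRatio_comp _ hf hb 0 (by fun_prop) (hcons.comp measurable_swap)
  rw [integral_pi_succ P _ (integrable_log_nceRatio_comp _ hf hb 0 (by fun_prop) measurable_id')]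
  simp only [Fin.cons_zero]
  calc ∫ w, ∫ p, Real.log (nceRatio f p.1 (Fin.cons p w : Fin (m + 1) → X × Y) 0) ∂P
        ∂(Measure.pi fun _ : Fin m => P)
      ≤ ∫ w, (∫ p, llr P Q p ∂P +
          (∫ p, nceRatio f p.1 (Fin.cons p w : Fin (m + 1) → X × Y) 0 ∂Q - 1))
        ∂(Measure.pi fun _ : Fin m => P) := by
        refine integral_mono hPi.integral_prod_left
          ((integrable_const _).add (hQi.integral_prod_left.sub (integrable_const _))) fun w => ?_
        have hw : Measurable fun p : X × Y => (Fin.cons p w : Fin (m + 1) → X × Y) :=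
          hcons.comp (measurable_id'.prodMk measurable_const)
        have h := integral_le_integral_llr_add P Q hPQ hint _
          (integrable_log_nceRatio_comp P hf hb 0 measurable_fst hw)
          (by simpa only [Real.exp_log (nceRatio_pos hb _ _ _)] using
            integrable_nceRatio_comp Q hf hb 0 measurable_fst hw)
        simpa only [Real.exp_log (nceRatio_pos hb _ _ _)] using h
    _ = ∫ p, llr P Q p ∂P := by
        have hQw : Integrable (fun w : Fin m → X × Y =>
            ∫ p, nceRatio f p.1 (Fin.cons p w : Fin (m + 1) → X × Y) 0 ∂Q)
            (Measure.pi fun _ : Fin m => P) := hQi.integral_prod_left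
        have hQw1 : Integrable (fun w : Fin m → X × Y =>
            ∫ p, nceRatio f p.1 (Fin.cons p w : Fin (m + 1) → X × Y) 0 ∂Q - 1)
            (Measure.pi fun _ : Fin m => P) := hQw.sub (integrable_const _)
        rw [integral_add (integrable_const _) hQw1, integral_sub hQw (integrable_const _), hone]
        simp

end

/-- Proposition 2.4 (final bound): the Weak-Conditional InfoNCE (WeaC-InfoNCE) objective
lower-bounds the conditional mutual information `MI(X;Y|Z) = ∫⁻ z, KL(κ z ‖ η z) ∂π`. -/
theorem stmt_7 {Z X Y : Type*} [MeasurableSpace Z]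
    [MeasurableSpace X] [StandardBorelSpace X] [MeasurableSpace Y] [StandardBorelSpace Y]
    (π : Measure Z) [IsProbabilityMeasure π]
    (κ η : Kernel Z (X × Y)) [IsMarkovKernel κ] [IsMarkovKernel η]
    (hη : ∀ z, η z = ((κ z).map Prod.fst).prod ((κ z).map Prod.snd))
    (n : ℕ) (hn : 1 ≤ n)
    (f : X × Y → ℝ) (hf : Measurable f) (hb : ∃ C, ∀ p, |f p| ≤ C) :
    ENNReal.ofReal
      (∫ z, (∫ v, Real.log (Real.exp (f ((v ⟨0, hn⟩).1, (v ⟨0, hn⟩).2)) /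
          (((1 : ℝ) / n) * ∑ j : Fin n, Real.exp (f ((v ⟨0, hn⟩).1, (v j).2))))
        ∂(Measure.pi (fun _ : Fin n => κ z))) ∂π)
      ≤ ∫⁻ z, klDiv (κ z) (η z) ∂π := by
  refine (ofReal_integral_le_lintegral_ofReal π _).trans (lintegral_mono fun z => ?_)
  unfold klDiv
  split_ifs with h
  · refine ENNReal.ofReal_le_ofReal ?_
    rw [hη z] at h ⊢
    obtain ⟨m, rfl⟩ : ∃ m, n = m + 1 := ⟨n - 1, by omega⟩
    exact integral_log_nceRatio_le (κ z) hf hb h.1 h.2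
  · exact le_top
end

section
/- Let Z be a measurable space and X, Y standard Borel spaces; let π be a probability measure on Z; let κ : Kernel Z (X × Y) be a Markov kernel and η : Kernel Z (X × Y) a Markov kernel with η z = ((κ z).map Prod.fst).prod ((κ z).map Prod.snd) for every z. Then ∫⁻ z, KL(κ z ‖ η z) ∂π = KL( π ⊗ₘ κ ‖ π ⊗ₘ η ), where π ⊗ₘ κ denotes Measure.compProd, the measure on Z × (X × Y) given by d(π ⊗ₘ κ)(z, p) = dπ(z) d(κ z)(p). In the paper's notation: MI(X;Y|Z) = E_{z∼P_Z}[KL(P_{X,Y|Z=z} ‖ P_{X|Z=z} ⊗ P_{Y|Z=z})] = KL(P_{X,Y,Z} ‖ P_Z · P_{X|Z} · P_{Y|Z}). -/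
/-!
Both divergences are, under absolute continuity, lower integrals of the nonnegative function
`klFun x = x * log x + 1 - x` of a density (`InformationTheory.klDiv_eq_lintegral_klFun`); this form
has no integrability side condition, so no separate treatment of an infinite value is needed.

If `κ z ≪ η z` for `π`-almost every `z`, then `π ⊗ₘ κ ≪ π ⊗ₘ η`, and the density of the
composition-products is the jointly measurable kernel density `Kernel.rnDeriv κ η`, whose sections
are the densities of `κ z` with respect to `η z` (`rnDeriv_compProd_eq_kernel_rnDeriv`). Tonelli's
theorem for `π ⊗ₘ η` then gives the identity. Otherwise `π ⊗ₘ κ` is not absolutely continuous, while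
`κ z ≪ η z` fails on a measurable set of positive `π`-measure, so both sides are `∞`.
-/

open MeasureTheory ProbabilityTheory
open scoped ENNReal

/-- Between probability measures the correction term `Q univ - P univ` in Mathlib's divergence
vanishes. -/
lemma klDiv_eq_mathlib {α : Type*} [MeasurableSpace α] (P Q : Measure α)
    [IsProbabilityMeasure P] [IsProbabilityMeasure Q] :
    klDiv P Q = InformationTheory.klDiv P Q := by
  simp [klDiv, InformationTheory.klDiv_def]

section

variable {Z W : Type*} [MeasurableSpace Z] [MeasurableSpace W]
  [MeasurableSpace.CountableOrCountablyGenerated Z W]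
  (π : Measure Z) [IsProbabilityMeasure π] (κ η : Kernel Z W) [IsMarkovKernel κ] [IsMarkovKernel η]

lemma rnDeriv_compProd_eq_kernel_rnDeriv (h : ∀ᵐ z ∂π, κ z ≪ η z) :
    (π ⊗ₘ κ).rnDeriv (π ⊗ₘ η) =ᵐ[π ⊗ₘ η] fun p ↦ Kernel.rnDeriv κ η p.1 p.2 := by
  have hm : Measurable fun p : Z × W ↦ Kernel.rnDeriv κ η p.1 p.2 := Kernel.measurable_rnDeriv κ η
  have hd : π ⊗ₘ κ = (π ⊗ₘ η).withDensity fun p ↦ Kernel.rnDeriv κ η p.1 p.2 := by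
    ext s hs
    rw [Measure.compProd_apply hs, withDensity_apply _ hs, ← lintegral_indicator hs,
      Measure.lintegral_compProd (hm.indicator hs)]
    refine lintegral_congr_ae ?_
    filter_upwards [h] with z hz
    rw [← Kernel.withDensity_rnDeriv_eq hz,
      Kernel.withDensity_apply' _ (Kernel.measurable_rnDeriv κ η),
      ← lintegral_indicator (measurable_prodMk_left hs)]
    rfl
  rw [hd]
  exact Measure.rnDeriv_withDensity _ hm

/-- The chain rule for the divergence of two composition-products with the same first marginal, in
integral form. -/
lemma lintegral_klDiv_eq_klDiv_compProd :
    ∫⁻ z, klDiv (κ z) (η z) ∂π = klDiv (π ⊗ₘ κ) (π ⊗ₘ η) := by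
  simp_rw [klDiv_eq_mathlib]
  by_cases h : ∀ᵐ z ∂π, κ z ≪ η z
  · have hm : Measurable fun p : Z × W ↦ Kernel.rnDeriv κ η p.1 p.2 := Kernel.measurable_rnDeriv κ η
    rw [InformationTheory.klDiv_eq_lintegral_klFun_of_ac
      (Measure.AbsolutelyContinuous.compProd_right h),
      lintegral_congr_ae (μ := π ⊗ₘ η) (g := fun p : Z × W ↦ ENNReal.ofReal
        (InformationTheory.klFun (Kernel.rnDeriv κ η p.1 p.2).toReal)),
      Measure.lintegral_compProd (by fun_prop)]
    · refine lintegral_congr_ae ?_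
      filter_upwards [h] with z hz
      rw [InformationTheory.klDiv_eq_lintegral_klFun_of_ac hz]
      refine lintegral_congr_ae ?_
      filter_upwards [Kernel.rnDeriv_eq_rnDeriv_measure (κ := κ) (η := η) (a := z)] with w hw
      rw [hw]
    · filter_upwards [rnDeriv_compProd_eq_kernel_rnDeriv π κ η h] with p hp
      rw [hp]
  · rw [InformationTheory.klDiv_of_not_ac
      (mt Measure.absolutelyContinuous_compProd_right_iff.mp h), eq_top_iff]
    have hs : MeasurableSet {z | ¬ κ z ≪ η z} :=
      (Kernel.measurableSet_absolutelyContinuous κ η).compl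
    calc (⊤ : ℝ≥0∞) = ∫⁻ _ in {z | ¬ κ z ≪ η z}, ⊤ ∂π := by
          rw [setLIntegral_const, ENNReal.top_mul]
          exact fun h0 ↦ h (ae_iff.mpr h0)
      _ = ∫⁻ z in {z | ¬ κ z ≪ η z}, InformationTheory.klDiv (κ z) (η z) ∂π :=
          setLIntegral_congr_fun hs fun z hz ↦ (InformationTheory.klDiv_of_not_ac hz).symm
      _ ≤ ∫⁻ z, InformationTheory.klDiv (κ z) (η z) ∂π := setLIntegral_le_lintegral _ _

end

/-- Lemma A.5: the conditional mutual information equals a single KL divergence between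
measures on the triple space, `MI(X;Y|Z) = KL(π ⊗ₘ κ ‖ π ⊗ₘ η)`. -/
theorem stmt_12 {Z X Y : Type*} [MeasurableSpace Z]
    [MeasurableSpace X] [StandardBorelSpace X] [MeasurableSpace Y] [StandardBorelSpace Y]
    (π : Measure Z) [IsProbabilityMeasure π]
    (κ η : Kernel Z (X × Y)) [IsMarkovKernel κ] [IsMarkovKernel η]
    (hη : ∀ z, η z = ((κ z).map Prod.fst).prod ((κ z).map Prod.snd)) :
    ∫⁻ z, klDiv (κ z) (η z) ∂π = klDiv (π ⊗ₘ κ) (π ⊗ₘ η) := by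
  exact lintegral_klDiv_eq_klDiv_compProd π κ η
end
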